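/- Let α ∈ (0, π] and ψ_{α,2}(θ) := (1 − θ/α)₊² for θ ∈ [0,π], where (x)₊ := max(x,0). Then the 2-Schoenberg coefficients b_{n,2}(α) := (n+1/2)∫₀^π P_n(cos θ) ψ_{α,2}(θ) sin θ dθ are given, for every n ≥ 0, by b_{n,2}(α) = (2n+1) 2^{n−1} { Σ_{m even, 0≤m≤n} binom(n,m) binom((n+m−1)/2, n) [ 1/(m+1) + (2^{1−m}/((m+1)α²)) Σ_{k=0}^{m/2} binom(m+1,k)(cos((m−2k+1)α) − 1)/(m−2k+1)² ] + Σ_{m odd, 0≤m≤n} binom(n,m) binom((n+m−1)/2, n) [ 1/(m+1) − (1/((m+1)2^{m+1})) binom(m+1,(m+1)/2) + (2^{1−m}/((m+1)α²)) Σ_{k=0}^{(m−1)/2} binom(m+1,k)(cos((m−2k+1)α) − 1)/(m−2k+1)² ] }. -/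

import Mathlib

open Real

/-- The Legendre polynomials, via the standard three-term recurrence
`(n+2) P_{n+2}(x) = (2n+3) x P_{n+1}(x) - (n+1) P_n(x)`, `P_0 = 1`, `P_1 = x`. -/
noncomputable def legendreP : ℕ → ℝ → ℝ
  | 0, _ => 1
  | 1, x => x
  | n + 2, x =>
      ((2 * (n : ℝ) + 3) * x * legendreP (n + 1) x - ((n : ℝ) + 1) * legendreP n x)
        / ((n : ℝ) + 2)

/-- Generalized binomial coefficient `binom(a, n) = a(a-1)⋯(a-n+1)/n!` for real `a`. -/
noncomputable def genBinom (a : ℝ) (n : ℕ) : ℝ :=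
  (∏ i ∈ Finset.range n, (a - i)) / (n.factorial : ℝ)

/-!
The Legendre recurrence, checked coefficient by coefficient, yields the explicit coefficients of
`P_n`, so the integral is a combination of the moments `∫ cos ^ m θ * sin θ * (1 - θ / α) ^ 2` over
`[0, α]`. One integration by parts, with `sin θ * cos ^ m θ` as the derivative, lowers the exponent
of `1 - θ / α` to one and leaves `∫ (1 - θ / α) * cos ^ (m + 1) θ`. Expanding `cos ^ (m + 1)` in
cosines of multiple angles, each frequency `j ≠ 0` contributes `(1 - cos (j * α)) / (j ^ 2 * α)`.
The frequency `0` occurs only for odd `m`, which accounts for the extra central binomial term there.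
-/

lemma cast_choose_succ_mul_add_one (R : Type*) [CommRing R] (n k : ℕ) :
    (n.choose (k + 1) : R) * (k + 1) = n.choose k * (n - k) := by
  have absorb : ((n : R) + 1) * n.choose k = (n + 1).choose (k + 1) * ((k : R) + 1) := by
    exact_mod_cast congrArg (Nat.cast (R := R)) (Nat.add_one_mul_choose_eq n k)
  rw [Nat.choose_succ_succ', Nat.cast_add] at absorb
  linear_combination -absorb

lemma cast_add_one_mul_choose_succ (R : Type*) [CommRing R] (n k : ℕ) :
    ((n : R) + 1) * n.choose (k + 1) = (n - k) * (n + 1).choose (k + 1) := by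
  rw [Nat.choose_succ_succ', Nat.cast_add]
  linear_combination cast_choose_succ_mul_add_one R n k

lemma genBinom_succ (a : ℝ) (n : ℕ) :
    ((n : ℝ) + 1) * genBinom a (n + 1) = (a - n) * genBinom a n := by
  simp only [genBinom, Finset.prod_range_succ, Nat.factorial_succ]
  push_cast
  field_simp

lemma genBinom_add_one_succ (a : ℝ) (n : ℕ) :
    ((n : ℝ) + 1) * genBinom (a + 1) (n + 1) = (a + 1) * genBinom a n := by
  simp only [genBinom, Finset.prod_range_succ', Nat.factorial_succ]
  push_cast
  simp only [add_sub_add_right_eq_sub, sub_zero]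
  field_simp

/-- The coefficient of `x ^ m` in the Legendre polynomial `P_n`, namely
`2 ^ n * binom(n, m) * binom((n + m - 1) / 2, n)`. It vanishes for `n < m`. -/
noncomputable def legendreCoeff (n m : ℕ) : ℝ :=
  2 ^ n * ((n.choose m : ℝ) * genBinom (((n : ℝ) + (m : ℝ) - 1) / 2) n)

lemma legendreCoeff_eq_zero_of_lt {n m : ℕ} (h : n < m) : legendreCoeff n m = 0 := by
  simp [legendreCoeff, Nat.choose_eq_zero_of_lt h]

lemma legendreCoeff_add_two_zero (n : ℕ) :
    ((n : ℝ) + 2) * legendreCoeff (n + 2) 0 = -(((n : ℝ) + 1) * legendreCoeff n 0) := by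
  have raise := genBinom_add_one_succ (((n : ℝ) - 1) / 2) (n + 1)
  have lower := genBinom_succ (((n : ℝ) - 1) / 2) n
  rw [show ((n : ℝ) - 1) / 2 + 1 = ((n : ℝ) + 1) / 2 by ring] at raise
  push_cast at raise
  simp only [legendreCoeff, Nat.choose_zero_right, Nat.cast_add, Nat.cast_ofNat, CharP.cast_eq_zero,
    add_zero, show ((n : ℝ) + 2 - 1) / 2 = ((n : ℝ) + 1) / 2 by ring]
  linear_combination (4 * 2 ^ n) * raise + (2 * 2 ^ n) * lower

lemma legendreCoeff_add_two_succ (n m : ℕ) :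
    ((n : ℝ) + 2) * legendreCoeff (n + 2) (m + 1)
      = (2 * (n : ℝ) + 3) * legendreCoeff (n + 1) m
        - ((n : ℝ) + 1) * legendreCoeff n (m + 1) := by
  have raise := genBinom_add_one_succ (((n : ℝ) + m) / 2) (n + 1)
  have lower := genBinom_succ (((n : ℝ) + m) / 2) n
  have pascal : ((n + 2).choose (m + 1) : ℝ) = (n + 1).choose m + (n + 1).choose (m + 1) := by
    exact_mod_cast Nat.choose_succ_succ' (n + 1) m
  have shift_top := cast_add_one_mul_choose_succ ℝ n m
  have shift_bottom := cast_choose_succ_mul_add_one ℝ (n + 1) m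
  push_cast at raise shift_bottom
  simp only [legendreCoeff]
  push_cast
  rw [show ((n : ℝ) + 2 + (m + 1) - 1) / 2 = (n + m) / 2 + 1 by ring,
    show ((n : ℝ) + 1 + m - 1) / 2 = (n + m) / 2 by ring,
    show ((n : ℝ) + (m + 1) - 1) / 2 = (n + m) / 2 by ring]
  set G₀ := genBinom (((n : ℝ) + m) / 2) n
  set G₁ := genBinom (((n : ℝ) + m) / 2) (n + 1)
  linear_combination 2 ^ n * (4 * (n + 2).choose (m + 1) * raise
    + 2 * (n + m + 2) * G₁ * pascal + G₀ * shift_top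
    + 2 * (n + 1).choose (m + 1) * lower + 2 * G₁ * shift_bottom)

theorem legendreP_eq_sum (n : ℕ) (x : ℝ) :
    legendreP n x = ∑ m ∈ Finset.range (n + 1), legendreCoeff n m * x ^ m := by
  induction n using Nat.twoStepInduction with
  | zero => simp [legendreP, legendreCoeff, genBinom]
  | one => simp [legendreP, legendreCoeff, genBinom, Finset.sum_range_succ]
  | more n ih ih_succ =>
    have extend : ∑ m ∈ Finset.range (n + 1), legendreCoeff n m * x ^ m
        = ∑ m ∈ Finset.range (n + 3), legendreCoeff n m * x ^ m := by
      simp [Finset.sum_range_succ _ (n + 2), Finset.sum_range_succ _ (n + 1),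
        legendreCoeff_eq_zero_of_lt]
    have shifted : ((n : ℝ) + 2) *
          ∑ m ∈ Finset.range (n + 2), legendreCoeff (n + 2) (m + 1) * x ^ (m + 1)
        = (2 * (n : ℝ) + 3) * x * ∑ m ∈ Finset.range (n + 2), legendreCoeff (n + 1) m * x ^ m
          - ((n : ℝ) + 1) *
            ∑ m ∈ Finset.range (n + 2), legendreCoeff n (m + 1) * x ^ (m + 1) := by
      simp only [Finset.mul_sum, ← Finset.sum_sub_distrib]
      refine Finset.sum_congr rfl fun m _ ↦ ?_
      linear_combination x ^ (m + 1) * legendreCoeff_add_two_succ n m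
    rw [legendreP, ih, ih_succ, extend, div_eq_iff (by positivity),
      Finset.sum_range_succ' _ (n + 2), Finset.sum_range_succ' _ (n + 2)]
    linear_combination -shifted - legendreCoeff_add_two_zero n

lemma integral_legendreP_comp_mul (n : ℕ) {u w : ℝ → ℝ} {a b : ℝ}
    (hu : ContinuousOn u (Set.uIcc a b)) (hw : IntervalIntegrable w MeasureTheory.volume a b) :
    ∫ θ in a..b, legendreP n (u θ) * w θ
      = ∑ m ∈ Finset.range (n + 1), legendreCoeff n m * ∫ θ in a..b, u θ ^ m * w θ := by
  simp only [legendreP_eq_sum, Finset.sum_mul, mul_assoc, ← intervalIntegral.integral_const_mul]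
  exact intervalIntegral.integral_finsetSum fun m _ ↦
    (hw.continuousOn_mul (hu.pow m)).const_mul _

lemma sum_range_succ_eq_of_reflect {A : Type*} [AddCommMonoid A] {f : ℕ → A} {M : ℕ}
    (hf : ∀ k ≤ M, f (M - k) = f k) :
    ∑ k ∈ Finset.range (M + 1), f k
      = (if Even M then f (M / 2) else 0) + 2 • ∑ k ∈ Finset.range ((M + 1) / 2), f k := by
  set half := (M + 1) / 2
  have reflect {c : ℕ} (hc : M + 1 = c + half) :
      ∑ k ∈ Finset.range half, f (c + k) = ∑ k ∈ Finset.range half, f k := by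
    rw [← Finset.sum_range_reflect]
    refine Finset.sum_congr rfl fun k hk ↦ ?_
    have hk : k < half := Finset.mem_range.mp hk
    rw [← hf k (by omega)]
    congr 1
    omega
  by_cases hM : Even M
  · rw [if_pos hM, show M + 1 = (half + 1) + half by grind, Finset.sum_range_add,
      Finset.sum_range_succ, reflect (by grind), show M / 2 = half by grind, two_nsmul]
    abel
  · rw [if_neg hM, show M + 1 = half + half by grind, Finset.sum_range_add, reflect (by grind),
      two_nsmul, zero_add]

lemma cos_pow_eq_sum_choose_mul_cos (M : ℕ) (x : ℝ) :
    cos x ^ M = (∑ k ∈ Finset.range (M + 1), (M.choose k : ℝ) * cos ((M - 2 * k) * x)) / 2 ^ M := by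
  have complex_expansion : (cos x : ℂ) ^ M
      = (∑ k ∈ Finset.range (M + 1),
          (M.choose k : ℂ) * Complex.exp (((M - 2 * k) * x : ℝ) * Complex.I)) / 2 ^ M := by
    rw [Complex.ofReal_cos, Complex.cos, div_pow, add_comm (Complex.exp _), add_pow]
    congr 1
    refine Finset.sum_congr rfl fun k hk ↦ ?_
    rw [← Complex.exp_nat_mul, ← Complex.exp_nat_mul, ← Complex.exp_add, mul_comm,
      Nat.cast_sub (Finset.mem_range_succ_iff.mp hk)]
    congr 2
    push_cast
    ring
  have real_parts := congrArg Complex.re complex_expansion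
  have htwo : (2 : ℂ) ^ M = ((2 ^ M : ℝ) : ℂ) := by push_cast; rfl
  simpa only [htwo, ← Complex.ofReal_pow, Complex.ofReal_re, Complex.div_ofReal_re, Complex.re_sum,
    ← Complex.ofReal_natCast, Complex.re_ofReal_mul, Complex.exp_ofReal_mul_I_re] using real_parts

/-- The mean value of `cos ^ M` over a period, i.e. the constant term of its Fourier expansion.
It isolates the one term by which the even and odd moments differ. -/
noncomputable def cosPowMean (M : ℕ) : ℝ :=
  if Even M then (M.choose (M / 2) : ℝ) / 2 ^ M else 0

lemma cosPowMean_of_even {M : ℕ} (hM : Even M) :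
    cosPowMean M = (M.choose (M / 2) : ℝ) / 2 ^ M :=
  if_pos hM

lemma cosPowMean_of_odd {M : ℕ} (hM : Odd M) : cosPowMean M = 0 :=
  if_neg (Nat.not_even_iff_odd.mpr hM)

theorem cos_pow_eq_cosPowMean_add (M : ℕ) (x : ℝ) :
    cos x ^ M = cosPowMean M
      + 2 / 2 ^ M * ∑ k ∈ Finset.range ((M + 1) / 2),
          (M.choose k : ℝ) * cos ((M - 2 * k) * x) := by
  have symm : ∀ k ≤ M, (M.choose (M - k) : ℝ) * cos ((M - 2 * (M - k : ℕ)) * x)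
      = M.choose k * cos ((M - 2 * k) * x) := by
    intro k hk
    rw [Nat.choose_symm hk, Nat.cast_sub hk, ← cos_neg]
    ring_nf
  have central : Even M → ((M : ℝ) - 2 * (M / 2 : ℕ)) = 0 := fun hM ↦ by
    rw [sub_eq_zero]
    exact_mod_cast (Nat.two_mul_div_two_of_even hM).symm
  rw [cos_pow_eq_sum_choose_mul_cos,
    sum_range_succ_eq_of_reflect (f := fun k ↦ (M.choose k : ℝ) * cos ((M - 2 * k) * x)) symm,
    nsmul_eq_mul, Nat.cast_ofNat, cosPowMean]
  split_ifs with hM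
  · simp only [central hM, zero_mul, cos_zero]
    ring
  · ring

section OneSubDiv

variable {α : ℝ}

lemma integral_mul_max_one_sub_div_pow {b : ℝ} (hα : 0 < α) (hb : α ≤ b) (f : ℝ → ℝ) {τ : ℕ}
    (hτ : τ ≠ 0) :
    ∫ θ in 0..b, f θ * max (1 - θ / α) 0 ^ τ = ∫ θ in 0..α, f θ * (1 - θ / α) ^ τ := by
  rw [intervalIntegral.integral_of_le (hα.le.trans hb), intervalIntegral.integral_of_le hα.le]
  calc ∫ θ in Set.Ioc 0 b, f θ * max (1 - θ / α) 0 ^ τ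
      = ∫ θ in Set.Ioc 0 α, f θ * max (1 - θ / α) 0 ^ τ := by
        refine MeasureTheory.setIntegral_eq_of_subset_of_forall_sdiff_eq_zero measurableSet_Ioc
          (Set.Ioc_subset_Ioc_right hb) fun θ hθ ↦ ?_
        have hαθ : α < θ := not_le.mp fun h ↦ hθ.2 ⟨hθ.1.1, h⟩
        rw [max_eq_right (sub_nonpos.mpr ((one_le_div hα).mpr hαθ.le)), zero_pow hτ, mul_zero]
    _ = ∫ θ in Set.Ioc 0 α, f θ * (1 - θ / α) ^ τ := by
        refine MeasureTheory.setIntegral_congr_fun measurableSet_Ioc fun θ hθ ↦ ?_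
        simp only [max_eq_left (sub_nonneg.mpr ((div_le_one hα).mpr hθ.2))]

lemma integral_legendreP_cos_mul_max_one_sub_div_pow {b : ℝ} (hα : 0 < α) (hb : α ≤ b) (n : ℕ)
    {τ : ℕ} (hτ : τ ≠ 0) :
    ∫ θ in 0..b, legendreP n (cos θ) * max (1 - θ / α) 0 ^ τ * sin θ
      = ∑ m ∈ Finset.range (n + 1),
          legendreCoeff n m * ∫ θ in 0..α, cos θ ^ m * (sin θ * (1 - θ / α) ^ τ) := by
  simp only [mul_right_comm _ (_ ^ τ) (sin _)]
  rw [integral_mul_max_one_sub_div_pow hα hb _ hτ,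
    ← integral_legendreP_comp_mul n continuous_cos.continuousOn
      (Continuous.intervalIntegrable (by fun_prop) _ _)]
  simp only [mul_assoc]

lemma integral_one_sub_div_pow_succ_mul_deriv (hα : α ≠ 0) (p : ℕ) {F F' : ℝ → ℝ}
    (hF : ∀ θ ∈ Set.uIcc 0 α, HasDerivAt F (F' θ) θ)
    (hF' : IntervalIntegrable F' MeasureTheory.volume 0 α) :
    ∫ θ in 0..α, (1 - θ / α) ^ (p + 1) * F' θ
      = (p + 1) / α * (∫ θ in 0..α, (1 - θ / α) ^ p * F θ) - F 0 := by
  have hweight (θ : ℝ) :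
      HasDerivAt (fun θ ↦ (1 - θ / α) ^ (p + 1)) (-((p + 1) / α) * (1 - θ / α) ^ p) θ := by
    refine ((((hasDerivAt_id' θ).div_const α).const_sub 1).pow (p + 1)).congr_deriv ?_
    push_cast [add_tsub_cancel_right]
    ring
  rw [intervalIntegral.integral_mul_deriv_eq_deriv_mul (fun θ _ ↦ hweight θ) hF
    (Continuous.intervalIntegrable (by fun_prop) _ _) hF']
  simp only [mul_assoc, intervalIntegral.integral_const_mul, div_self hα, sub_self, zero_div,
    sub_zero, one_pow, one_mul, zero_pow p.succ_ne_zero, zero_mul]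
  ring

lemma integral_one_sub_div (hα : α ≠ 0) : ∫ θ in 0..α, (1 - θ / α) = α / 2 :=
  calc ∫ θ in 0..α, (1 - θ / α) = α - α ^ 2 / 2 / α := by simp
    _ = α / 2 := by field_simp; ring

lemma integral_one_sub_div_mul_cos (hα : α ≠ 0) {j : ℝ} (hj : j ≠ 0) :
    ∫ θ in 0..α, (1 - θ / α) * cos (j * θ) = (1 - cos (j * α)) / (j ^ 2 * α) := by
  have hderiv (θ : ℝ) : HasDerivAt (fun θ ↦ sin (j * θ) / j) (cos (j * θ)) θ := by
    simpa [hj] using (((hasDerivAt_id θ).const_mul j).sin).div_const j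
  have integral_sin_mul : ∫ θ in 0..α, sin (j * θ) / j = (1 - cos (j * α)) / j ^ 2 := by
    rw [intervalIntegral.integral_div, intervalIntegral.integral_comp_mul_left _ hj, integral_sin,
      mul_zero, cos_zero, smul_eq_mul]
    field_simp
  calc ∫ θ in 0..α, (1 - θ / α) * cos (j * θ)
      = 1 / α * ∫ θ in 0..α, sin (j * θ) / j := by
        simpa using integral_one_sub_div_pow_succ_mul_deriv hα 0 (fun θ _ ↦ hderiv θ)
          (Continuous.intervalIntegrable (by fun_prop) _ _)
    _ = (1 - cos (j * α)) / (j ^ 2 * α) := by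
        rw [integral_sin_mul]
        field_simp

lemma integral_one_sub_div_mul_cos_pow (hα : α ≠ 0) (M : ℕ) :
    ∫ θ in 0..α, (1 - θ / α) * cos θ ^ M
      = α / 2 * cosPowMean M
        + 2 / (2 ^ M * α) * ∑ k ∈ Finset.range ((M + 1) / 2),
            (M.choose k : ℝ) * (1 - cos ((M - 2 * k) * α)) / (M - 2 * k) ^ 2 := by
  have expand (θ : ℝ) : (1 - θ / α) * cos θ ^ M = cosPowMean M * (1 - θ / α)
      + ∑ k ∈ Finset.range ((M + 1) / 2),
          2 / 2 ^ M * (M.choose k : ℝ) * ((1 - θ / α) * cos ((M - 2 * k) * θ)) := by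
    rw [cos_pow_eq_cosPowMean_add, mul_add, Finset.mul_sum, Finset.mul_sum]
    congr 1
    · ring
    · exact Finset.sum_congr rfl fun k _ ↦ by ring
  have frequency_ne_zero {k : ℕ} (hk : k ∈ Finset.range ((M + 1) / 2)) : (M : ℝ) - 2 * k ≠ 0 := by
    have : 2 * k < M := by have := Finset.mem_range.mp hk; omega
    exact sub_ne_zero.mpr (by exact_mod_cast this.ne')
  simp only [expand]
  rw [intervalIntegral.integral_add (Continuous.intervalIntegrable (by fun_prop) _ _)
      (Continuous.intervalIntegrable (by fun_prop) _ _),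
    intervalIntegral.integral_finsetSum fun k _ ↦ Continuous.intervalIntegrable (by fun_prop) _ _,
    intervalIntegral.integral_const_mul, integral_one_sub_div hα, mul_comm (cosPowMean M),
    Finset.mul_sum]
  congr 1
  refine Finset.sum_congr rfl fun k hk ↦ ?_
  rw [intervalIntegral.integral_const_mul,
    integral_one_sub_div_mul_cos hα (frequency_ne_zero hk)]
  have := frequency_ne_zero hk
  field_simp

lemma integral_cos_pow_mul_sin_mul_one_sub_div_pow_succ (hα : α ≠ 0) (m p : ℕ) :
    ∫ θ in 0..α, cos θ ^ m * (sin θ * (1 - θ / α) ^ (p + 1))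
      = 1 / ((m : ℝ) + 1)
        - (p + 1) / (((m : ℝ) + 1) * α) * ∫ θ in 0..α, (1 - θ / α) ^ p * cos θ ^ (m + 1) := by
  have hderiv (θ : ℝ) :
      HasDerivAt (fun θ ↦ -1 / ((m : ℝ) + 1) * cos θ ^ (m + 1)) (cos θ ^ m * sin θ) θ := by
    refine (((hasDerivAt_cos θ).pow (m + 1)).const_mul (-1 / ((m : ℝ) + 1))).congr_deriv ?_
    push_cast [add_tsub_cancel_right]
    field_simp
  have parts := integral_one_sub_div_pow_succ_mul_deriv hα p (fun θ _ ↦ hderiv θ)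
    (Continuous.intervalIntegrable (by fun_prop) _ _)
  simp only [mul_left_comm _ (-1 / ((m : ℝ) + 1)), intervalIntegral.integral_const_mul, cos_zero,
    one_pow] at parts
  calc ∫ θ in 0..α, cos θ ^ m * (sin θ * (1 - θ / α) ^ (p + 1))
      = ∫ θ in 0..α, (1 - θ / α) ^ (p + 1) * (cos θ ^ m * sin θ) := by
        congr 1 with θ
        ring
    _ = 1 / ((m : ℝ) + 1)
        - (p + 1) / (((m : ℝ) + 1) * α) * ∫ θ in 0..α, (1 - θ / α) ^ p * cos θ ^ (m + 1) := by
        rw [parts]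
        field_simp
        ring

theorem integral_cos_pow_mul_sin_mul_one_sub_div_sq (hα : α ≠ 0) (m : ℕ) :
    ∫ θ in 0..α, cos θ ^ m * (sin θ * (1 - θ / α) ^ 2)
      = 1 / ((m : ℝ) + 1) - cosPowMean (m + 1) / ((m : ℝ) + 1)
        + (2 : ℝ) ^ (1 - (m : ℤ)) / (((m : ℝ) + 1) * α ^ 2) *
          ∑ k ∈ Finset.range (m / 2 + 1),
            ((m + 1).choose k : ℝ) * (cos (((m : ℝ) - 2 * k + 1) * α) - 1) /
              ((m : ℝ) - 2 * k + 1) ^ 2 := by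
  have negate : ∑ k ∈ Finset.range ((m + 1 + 1) / 2), ((m + 1).choose k : ℝ) *
        (1 - cos (((m + 1 : ℕ) - 2 * k) * α)) / ((m + 1 : ℕ) - 2 * k) ^ 2
      = -∑ k ∈ Finset.range (m / 2 + 1), ((m + 1).choose k : ℝ) *
          (cos (((m : ℝ) - 2 * k + 1) * α) - 1) / ((m : ℝ) - 2 * k + 1) ^ 2 := by
    rw [show (m + 1 + 1) / 2 = m / 2 + 1 by omega, ← Finset.sum_neg_distrib]
    refine Finset.sum_congr rfl fun k _ ↦ ?_
    rw [show ((m + 1 : ℕ) : ℝ) - 2 * k = m - 2 * k + 1 by push_cast; ring]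
    ring
  have parts := integral_cos_pow_mul_sin_mul_one_sub_div_pow_succ hα m 1
  simp only [Nat.cast_one, one_add_one_eq_two, pow_one] at parts
  rw [parts, integral_one_sub_div_mul_cos_pow hα, negate, zpow_sub₀ two_ne_zero, zpow_one,
    zpow_natCast]
  field_simp
  ring

end OneSubDiv

/-- closed form for the 2-Schoenberg coefficients
`b_{n,2}(α) = (n + 1/2) ∫₀^π P_n(cos θ) ψ_{α,2}(θ) sin θ dθ` of the Askey
family `ψ_{α,2}(θ) = ((1 - θ/α)₊)²` for `α ∈ (0, π]`. -/
theorem askey_schoenberg_coefficients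
    (α : ℝ) (hα : α ∈ Set.Ioc 0 π) (n : ℕ) :
    ((n : ℝ) + 1 / 2) *
        ∫ θ in (0 : ℝ)..π, legendreP n (Real.cos θ) * (max (1 - θ / α) 0) ^ 2 * Real.sin θ
      = (2 * (n : ℝ) + 1) * (2 : ℝ) ^ ((n : ℤ) - 1) *
        ((∑ m ∈ (Finset.range (n + 1)).filter (fun m => Even m),
            (n.choose m : ℝ) * genBinom (((n : ℝ) + (m : ℝ) - 1) / 2) n *
              (1 / ((m : ℝ) + 1) +
                (2 : ℝ) ^ (1 - (m : ℤ)) / (((m : ℝ) + 1) * α ^ 2) *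
                  ∑ k ∈ Finset.range (m / 2 + 1),
                    ((m + 1).choose k : ℝ) *
                      (Real.cos (((m : ℝ) - 2 * (k : ℝ) + 1) * α) - 1) /
                        ((m : ℝ) - 2 * (k : ℝ) + 1) ^ 2))
        + ∑ m ∈ (Finset.range (n + 1)).filter (fun m => Odd m),
            (n.choose m : ℝ) * genBinom (((n : ℝ) + (m : ℝ) - 1) / 2) n *
              (1 / ((m : ℝ) + 1)
                - (1 / (((m : ℝ) + 1) * 2 ^ (m + 1))) * ((m + 1).choose ((m + 1) / 2) : ℝ)
                + (2 : ℝ) ^ (1 - (m : ℤ)) / (((m : ℝ) + 1) * α ^ 2) *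
                    ∑ k ∈ Finset.range ((m - 1) / 2 + 1),
                      ((m + 1).choose k : ℝ) *
                        (Real.cos (((m : ℝ) - 2 * (k : ℝ) + 1) * α) - 1) /
                          ((m : ℝ) - 2 * (k : ℝ) + 1) ^ 2)) := by
  have normalization :
      (2 * (n : ℝ) + 1) * (2 : ℝ) ^ ((n : ℤ) - 1) = ((n : ℝ) + 1 / 2) * 2 ^ n := by
    rw [zpow_sub_one₀ two_ne_zero, zpow_natCast]
    ring
  rw [integral_legendreP_cos_mul_max_one_sub_div_pow hα.1 hα.2 n two_ne_zero, normalization,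
    mul_assoc]
  simp only [integral_cos_pow_mul_sin_mul_one_sub_div_sq hα.1.ne', legendreCoeff,
    mul_assoc (2 ^ n : ℝ), ← Finset.mul_sum]
  rw [← Finset.sum_filter_add_sum_filter_not _ (fun m ↦ Even m)]
  simp only [Nat.not_even_iff_odd]
  congr 3 <;> refine Finset.sum_congr rfl fun m hm ↦ ?_
  · have hm : Even m := (Finset.mem_filter.mp hm).2
    rw [cosPowMean_of_odd hm.add_one, zero_div, sub_zero]
  · have hm : Odd m := (Finset.mem_filter.mp hm).2
    rw [cosPowMean_of_even hm.add_one, show (m - 1) / 2 = m / 2 by grind, one_div_mul_eq_div,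
      div_div, mul_comm (2 ^ (m + 1) : ℝ)]
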